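/- Let N ≥ 1 be an integer, ℓ > 0, a_1, …, a_N nonzero reals, r real, μ ∈ ℝ^N. Set Ξ_i = 1 + a_i²/ℓ² and W = 1 + Σ_{i=1}^N a_i² μ_i²/(ℓ² Ξ_i). Let γ̃ be the N × N symmetric real matrix with entries γ̃_{ij} = ((r² + a_i²)/Ξ_i)·δ_{ij} − (r²/(1 + Σ_{k=1}^N μ_k²))·μ_i μ_j − ((ℓ² − r²)/(4W))·(2 a_i² μ_i/(ℓ² Ξ_i))·(2 a_j² μ_j/(ℓ² Ξ_j)). Then det γ̃ = (1/(W·(1 + Σ_{k=1}^N μ_k²)))·(1 + Σ_{k=1}^N a_k² μ_k²/(r² + a_k²))·∏_{k=1}^N (r² + a_k²)/Ξ_k. -/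

import Mathlib

/-!
The matrix is a diagonal matrix `D` minus multiples of `μ μᵀ` and `∇W ∇Wᵀ`, so the matrix
determinant lemma reduces its determinant to a `2 × 2` determinant built from the Gram matrix of
`μ` and `∇W` for the form `D⁻¹`. Put `T = ∑ aₖ² μₖ² / (r² + aₖ²)` and `x = (r² / ℓ²) T`. After
clearing `W` and `1 + ∑ μₖ²`, the diagonal entries become `1 + (T - x)` and `1 + x`, while the
off-diagonal entries have product `(T - x) x`; what remains is
`(1 + (T - x)) (1 + x) - (T - x) x = 1 + T`.
-/

section RankTwoUpdate

open Matrix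

variable {ι : Type*} [Fintype ι] [DecidableEq ι]

theorem det_add_vecMulVec_add_vecMulVec {R : Type*} [CommRing R] {A : Matrix ι ι R}
    (hA : IsUnit A.det) (u v w z : ι → R) :
    (A + vecMulVec u v + vecMulVec w z).det =
      A.det * ((1 + v ⬝ᵥ A⁻¹ *ᵥ u) * (1 + z ⬝ᵥ A⁻¹ *ᵥ w) -
        (v ⬝ᵥ A⁻¹ *ᵥ w) * (z ⬝ᵥ A⁻¹ *ᵥ u)) := by
  have columns_mul_rows : vecMulVec u v + vecMulVec w z = (of ![u, w])ᵀ * of ![v, z] := by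
    ext i j
    simp [vecMulVec_apply, mul_apply]
  have entry (k l : Fin 2) : (of ![v, z] * A⁻¹ * (of ![u, w])ᵀ) k l =
      ![v, z] k ⬝ᵥ A⁻¹ *ᵥ ![u, w] l := by
    rw [Matrix.mul_assoc]
    rfl
  rw [add_assoc, columns_mul_rows, det_add_mul _ _ hA, det_fin_two]
  simp only [Matrix.add_apply, one_apply, entry]
  simp

theorem det_diagonal_sub_smul_vecMulVec_sub_smul_vecMulVec {K : Type*} [Field K]
    {d : ι → K} (hd : ∀ i, d i ≠ 0) (p q : K) (u v : ι → K) :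
    (diagonal d - p • vecMulVec u u - q • vecMulVec v v).det =
      (∏ i, d i) * ((1 - p * ∑ i, u i ^ 2 / d i) * (1 - q * ∑ i, v i ^ 2 / d i) -
        p * q * (∑ i, u i * v i / d i) ^ 2) := by
  have hdet : IsUnit (diagonal d).det := by
    simpa [det_diagonal, Finset.prod_ne_zero_iff] using hd
  have pairing (x y : ι → K) : x ⬝ᵥ (diagonal d)⁻¹ *ᵥ y = ∑ i, x i * y i / d i := by
    have hinv : (diagonal d)⁻¹ = diagonal d⁻¹ :=
      inv_eq_right_inv (by simp [diagonal_mul_diagonal, hd])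
    simp only [hinv, dotProduct, mulVec_diagonal, Pi.inv_apply]
    exact Finset.sum_congr rfl fun i _ => by ring
  rw [sub_eq_add_neg, sub_eq_add_neg, ← neg_smul, ← neg_smul, ← smul_vecMulVec, ← smul_vecMulVec,
    det_add_vecMulVec_add_vecMulVec hdet, det_diagonal]
  simp only [mulVec_smul, dotProduct_smul, pairing, smul_eq_mul, mul_comm (v _) (u _), ← pow_two]
  ring

end RankTwoUpdate

section MuSector

open Matrix

variable {K ι : Type*} [Field K]

/-- The factor `Ξ = 1 + a² / ℓ²` attached to a rotation parameter `a`. -/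
def rotationXi (L a : K) : K := 1 + a ^ 2 / L ^ 2

/-- The function `W = 1 + ∑ aᵢ² μᵢ² / (ℓ² Ξᵢ)` of the metric. -/
def metricW [Fintype ι] (L : K) (a μ : ι → K) : K :=
  1 + ∑ i, a i ^ 2 * μ i ^ 2 / (L ^ 2 * rotationXi L (a i))

/-- The vector of partial derivatives `∂W / ∂μᵢ`, given by its closed form so that it makes sense
over any field. -/
def gradW (L : K) (a μ : ι → K) (i : ι) : K :=
  2 * a i ^ 2 * μ i / (L ^ 2 * rotationXi L (a i))

/-- The matrix `γ̃` of the `μ`-sector of the metric, over an arbitrary field. -/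
def muSectorMatrix [Fintype ι] [DecidableEq ι] (L r : K) (a μ : ι → K) : Matrix ι ι K :=
  of fun i j =>
    (if i = j then (r ^ 2 + a i ^ 2) / rotationXi L (a i) else 0) -
      r ^ 2 / (1 + ∑ k, μ k ^ 2) * (μ i * μ j) -
      (L ^ 2 - r ^ 2) / (4 * metricW L a μ) * gradW L a μ i * gradW L a μ j

theorem muSectorMatrix_eq_diagonal_sub_smul_vecMulVec [Fintype ι] [DecidableEq ι]
    (L r : K) (a μ : ι → K) :
    muSectorMatrix L r a μ =
      diagonal (fun i => (r ^ 2 + a i ^ 2) / rotationXi L (a i)) -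
        (r ^ 2 / (1 + ∑ k, μ k ^ 2)) • vecMulVec μ μ -
        ((L ^ 2 - r ^ 2) / (4 * metricW L a μ)) • vecMulVec (gradW L a μ) (gradW L a μ) := by
  ext i j
  simp [muSectorMatrix, diagonal_apply, vecMulVec_apply, mul_assoc]

theorem sq_mul_rotationXi {L : K} (hL : L ≠ 0) (a : K) :
    L ^ 2 * rotationXi L a = L ^ 2 + a ^ 2 := by
  rw [rotationXi]
  field_simp

section GramMatrix

variable [Fintype ι] {L r : K} {a : ι → K}

theorem sq_mul_sum_sq_div_div_rotationXi (hL : L ≠ 0) (hρ : ∀ i, r ^ 2 + a i ^ 2 ≠ 0) (μ : ι → K) :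
    r ^ 2 * ∑ i, μ i ^ 2 / ((r ^ 2 + a i ^ 2) / rotationXi L (a i)) =
      ∑ i, μ i ^ 2 - (1 - r ^ 2 / L ^ 2) * ∑ i, a i ^ 2 * μ i ^ 2 / (r ^ 2 + a i ^ 2) := by
  simp only [Finset.mul_sum, ← Finset.sum_sub_distrib]
  refine Finset.sum_congr rfl fun i _ => ?_
  have := hρ i
  rw [rotationXi]
  field_simp
  ring

theorem sum_mul_gradW_div_div_rotationXi (hΞ : ∀ i, rotationXi L (a i) ≠ 0) (μ : ι → K) :
    ∑ i, μ i * gradW L a μ i / ((r ^ 2 + a i ^ 2) / rotationXi L (a i)) =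
      2 / L ^ 2 * ∑ i, a i ^ 2 * μ i ^ 2 / (r ^ 2 + a i ^ 2) := by
  rw [Finset.mul_sum]
  refine Finset.sum_congr rfl fun i _ => ?_
  have := hΞ i
  rw [gradW]
  field_simp

theorem sub_mul_sum_gradW_sq_div_div_rotationXi (hL : L ≠ 0) (hΞ : ∀ i, rotationXi L (a i) ≠ 0)
    (hρ : ∀ i, r ^ 2 + a i ^ 2 ≠ 0) (μ : ι → K) :
    (L ^ 2 - r ^ 2) *
        ∑ i, gradW L a μ i ^ 2 / ((r ^ 2 + a i ^ 2) / rotationXi L (a i)) =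
      4 * (metricW L a μ - 1 -
        r ^ 2 / L ^ 2 * ∑ i, a i ^ 2 * μ i ^ 2 / (r ^ 2 + a i ^ 2)) := by
  simp only [metricW, add_sub_cancel_left, Finset.mul_sum, ← Finset.sum_sub_distrib]
  refine Finset.sum_congr rfl fun i _ => ?_
  have hΞi := hΞ i
  have hρi := hρ i
  rw [gradW]
  field_simp
  linear_combination 4 * a i ^ 2 * μ i ^ 2 * r ^ 2 * sq_mul_rotationXi hL (a i)

end GramMatrix

theorem mu_sector_det_general [Fintype ι] [DecidableEq ι] [NeZero (2 : K)] {L r : K}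
    {a μ : ι → K} (hL : L ≠ 0) (hΞ : ∀ i, rotationXi L (a i) ≠ 0)
    (hρ : ∀ i, r ^ 2 + a i ^ 2 ≠ 0) (hW : metricW L a μ ≠ 0) (hμ : 1 + ∑ k, μ k ^ 2 ≠ 0) :
    (muSectorMatrix L r a μ).det =
      1 / (metricW L a μ * (1 + ∑ k, μ k ^ 2)) *
        (1 + ∑ k, a k ^ 2 * μ k ^ 2 / (r ^ 2 + a k ^ 2)) *
        ∏ k, (r ^ 2 + a k ^ 2) / rotationXi L (a k) := by
  have hd (i) : (r ^ 2 + a i ^ 2) / rotationXi L (a i) ≠ 0 := div_ne_zero (hρ i) (hΞ i)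
  have hfour : (4 : K) ≠ 0 := by
    rw [show (4 : K) = 2 ^ 2 by norm_num]
    exact pow_ne_zero 2 two_ne_zero
  rw [muSectorMatrix_eq_diagonal_sub_smul_vecMulVec,
    det_diagonal_sub_smul_vecMulVec_sub_smul_vecMulVec hd, sum_mul_gradW_div_div_rotationXi hΞ,
    mul_comm (∏ i, _)]
  congr 1
  have hμμ := sq_mul_sum_sq_div_div_rotationXi hL hρ μ
  have hWW := sub_mul_sum_gradW_sq_div_div_rotationXi hL hΞ hρ μ
  set T := ∑ k, a k ^ 2 * μ k ^ 2 / (r ^ 2 + a k ^ 2)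
  set S := ∑ k, μ k ^ 2
  set W := metricW L a μ
  set x := r ^ 2 / L ^ 2 * T with hx
  have diag_μ : 1 - r ^ 2 / (1 + S) * ∑ i, μ i ^ 2 / ((r ^ 2 + a i ^ 2) / rotationXi L (a i)) =
      (1 + (T - x)) / (1 + S) := by
    rw [div_mul_eq_mul_div, hμμ, hx]
    field_simp
    ring
  have diag_W : 1 - (L ^ 2 - r ^ 2) / (4 * W) *
      ∑ i, gradW L a μ i ^ 2 / ((r ^ 2 + a i ^ 2) / rotationXi L (a i)) = (1 + x) / W := by
    rw [div_mul_eq_mul_div, hWW]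
    field_simp
    ring
  have off_diag : r ^ 2 / (1 + S) * ((L ^ 2 - r ^ 2) / (4 * W)) * (2 / L ^ 2 * T) ^ 2 =
      (T - x) * x / ((1 + S) * W) := by
    rw [hx]
    field_simp
    ring
  rw [diag_μ, diag_W, off_diag]
  field_simp
  ring

section Positivity

variable [LinearOrder K] [IsStrictOrderedRing K]

theorem rotationXi_pos (L a : K) : 0 < rotationXi L a := by
  unfold rotationXi
  positivity

theorem metricW_pos [Fintype ι] (L : K) (a μ : ι → K) : 0 < metricW L a μ :=
  add_pos_of_pos_of_nonneg one_pos <| Finset.sum_nonneg fun i _ => by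
    have := rotationXi_pos L (a i)
    positivity

end Positivity

end MuSector

/-- Determinant of the matrix `γ̃` of the `μ`-sector of the metric
(after eliminating the constrained variable `μ_{N+1}`):
`det γ̃ = (1/(W (1 + ∑ μₖ²))) (1 + ∑ aₖ² μₖ²/(r² + aₖ²)) ∏ₖ (r² + aₖ²)/Ξₖ`. -/
theorem mu_sector_det
    (N : ℕ) (hN : 1 ≤ N) (L : ℝ) (hL : 0 < L) (a : Fin N → ℝ) (ha : ∀ i, a i ≠ 0)
    (r : ℝ) (μ : Fin N → ℝ) :
    let Ξ : Fin N → ℝ := fun i => 1 + a i ^ 2 / L ^ 2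
    let W : ℝ := 1 + ∑ i, a i ^ 2 * μ i ^ 2 / (L ^ 2 * Ξ i)
    (Matrix.of fun i j : Fin N =>
        (if i = j then (r ^ 2 + a i ^ 2) / Ξ i else 0) -
          r ^ 2 / (1 + ∑ k, μ k ^ 2) * (μ i * μ j) -
          (L ^ 2 - r ^ 2) / (4 * W) * (2 * a i ^ 2 * μ i / (L ^ 2 * Ξ i)) *
            (2 * a j ^ 2 * μ j / (L ^ 2 * Ξ j))).det =
      1 / (W * (1 + ∑ k, μ k ^ 2)) *
        (1 + ∑ k, a k ^ 2 * μ k ^ 2 / (r ^ 2 + a k ^ 2)) *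
        ∏ k, (r ^ 2 + a k ^ 2) / Ξ k := by
  have hρ (i) : r ^ 2 + a i ^ 2 ≠ 0 := by have := ha i; positivity
  exact mu_sector_det_general hL.ne' (fun i => (rotationXi_pos L (a i)).ne') hρ
    (metricW_pos L a μ).ne' (by positivity)
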